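/- Let α be a transition rate function on [d] in (D-Lip) satisfying (Erg), and let Φ : S_d → ℝ be in (D-Lip). Let μ₀ ∈ S_d, and for each N ≥ 1 let (p_t^N)_{t≥0} be the law of the N-particle continuous-time Markov chain on [d]^N with generator Q^N and initial law the N-fold product measure μ₀^{⊗N}. Then there is a constant C, independent of N and of μ₀, such that sup_{t ≥ 0} | Σ_{x ∈ [d]^N} p_t^N(x) Φ(μ^N_x) − Φ(m(t; μ₀)) | ≤ C/N. -/

import Mathlib

/-!
The proof compares the particle system with the flow through `U r μ = Φ (m r μ)`.

A function in (D-Lip) has only one-sided derivatives towards the vertices of the simplex, but as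
these are Lipschitz in the measure they add up, and mean value inequalities along segments give a
genuine second-order expansion `F ν = F μ + (ν - μ) ⬝ᵥ δF μ + O(|ν - μ|²)` (`DLipC.taylor`).
Applied to `Φ` and to the flow this yields such an expansion for `U r`. The assumption (Erg)
bounds the second-order term of `m r` only uniformly in `r`; splitting `m r = m (r/2) ∘ m (r/2)` by
the semigroup property and using the exponential contraction of each half makes the remainder of
`U r` decay like `exp (-lam r / 2)` (`taylor_decay`).

The expansion is all that is needed afterwards. On functions of the empirical measure the generator
differs from the drift of the Kolmogorov equation by the quadratic remainder over `N`
(`genQ_approx`), so `r ↦ E U r (μ^N_{t - r})` has right derivative `O(exp (-lam r / 2) / N)` and its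
endpoint values differ by `O(1/N)` uniformly in `t` (`dynamic_error`). Its value at `r = t` is
`E U t (μ^N_0)`, which is within `O(1/N)` of `U t μ₀` because under independent sampling the linear
term averages to zero and the quadratic one has mean `O(1/N)` (`iid_error`).
-/

open Finset Filter Topology

/-- The simplex of probability vectors on `Fin d`. -/
def simplex (d : ℕ) : Set (Fin d → ℝ) :=
  {μ | (∀ z, 0 ≤ μ z) ∧ ∑ z, μ z = 1}

/-- The ℓ¹ norm on `Fin d → ℝ`. -/
def l1 {d : ℕ} (v : Fin d → ℝ) : ℝ := ∑ z, |v z|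

/-- The `z`-th standard basis vector (Dirac measure at `z`). -/
def bvec {d : ℕ} (z : Fin d) : Fin d → ℝ := fun y => if y = z then 1 else 0

/-- Linear functional derivative: `δF/δm (μ, z) = v`. -/
def HasLFDerivAt {d : ℕ} (F : (Fin d → ℝ) → ℝ) (μ : Fin d → ℝ) (z : Fin d) (v : ℝ) : Prop :=
  Filter.Tendsto (fun ε : ℝ => (F ((1 - ε) • μ + ε • bvec z) - F μ) / ε)
    (nhdsWithin 0 (Set.Ioi 0)) (nhds v)

/-- Directional derivative `D^m_{yz} F (μ) = v`. -/
def HasDmDerivAt {d : ℕ} (F : (Fin d → ℝ) → ℝ) (μ : Fin d → ℝ) (y z : Fin d) (v : ℝ) : Prop :=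
  Filter.Tendsto (fun ε : ℝ => (F (μ + ε • (bvec z - bvec y)) - F μ) / ε)
    (nhdsWithin 0 (Set.Ioi 0)) (nhds v)

/-- `α` is a transition rate function on `[d]`. -/
def IsRate (d : ℕ) (α : (Fin d → ℝ) → Matrix (Fin d) (Fin d) ℝ) : Prop :=
  ContinuousOn α (simplex d) ∧
  (∀ μ ∈ simplex d, ∀ x y, x ≠ y → 0 ≤ α μ x y) ∧
  (∀ μ ∈ simplex d, ∀ x, ∑ y, α μ x y = 0)

/-- `m` is the measure flow solving the nonlinear Kolmogorov equation for `α`. -/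
def IsFlow {d : ℕ} (α : (Fin d → ℝ) → Matrix (Fin d) (Fin d) ℝ)
    (m : ℝ → (Fin d → ℝ) → Fin d → ℝ) : Prop :=
  ∀ μ ∈ simplex d, m 0 μ = μ ∧ (∀ t, 0 ≤ t → m t μ ∈ simplex d) ∧
    ∀ t, 0 ≤ t → HasDerivAt (fun s => m s μ) (Matrix.vecMul (m t μ) (α (m t μ))) t

/-- A real-valued function on the simplex is in (D-Lip) with linear functional derivative `δF`. -/
def DLipR {d : ℕ} (F : (Fin d → ℝ) → ℝ) (δF : (Fin d → ℝ) → Fin d → ℝ) : Prop :=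
  (∃ K : ℝ, ∀ μ ∈ simplex d, ∀ ν ∈ simplex d, |F μ - F ν| ≤ K * l1 (μ - ν)) ∧
  (∀ μ ∈ simplex d, ∀ z, HasLFDerivAt F μ z (δF μ z)) ∧
  (∃ K : ℝ, ∀ μ ∈ simplex d, ∀ ν ∈ simplex d, l1 (δF μ - δF ν) ≤ K * l1 (μ - ν))

/-- The matrix-valued transition rate function is in (D-Lip), componentwise. -/
def DLipRate {d : ℕ} (α : (Fin d → ℝ) → Matrix (Fin d) (Fin d) ℝ)
    (δα : (Fin d → ℝ) → Fin d → Matrix (Fin d) (Fin d) ℝ) : Prop :=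
  ∀ x y, DLipR (fun μ => α μ x y) (fun μ z => δα μ z x y)

/-- The ergodicity assumption (Erg) for the flow `m`, with derivative data `δm`. -/
def Erg {d : ℕ} (m : ℝ → (Fin d → ℝ) → Fin d → ℝ)
    (δm : ℝ → (Fin d → ℝ) → Fin d → Fin d → ℝ) (lam c₁ k₁ : ℝ) : Prop :=
  0 < lam ∧ 0 < c₁ ∧ 0 < k₁ ∧
  (∀ t, 0 ≤ t → ∀ μ ∈ simplex d, ∀ μ' ∈ simplex d,
    l1 (m t μ - m t μ') ≤ c₁ * Real.exp (-lam * t) * l1 (μ - μ')) ∧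
  (∀ t, 0 ≤ t → ∀ μ ∈ simplex d, ∀ z x, HasLFDerivAt (fun ν => m t ν x) μ z (δm t μ z x)) ∧
  (∀ t, 0 ≤ t → ∀ μ ∈ simplex d, ∀ μ' ∈ simplex d, ∀ z,
    l1 (δm t μ z - δm t μ' z) ≤ k₁ * l1 (μ - μ'))

/-- Empirical measure of a configuration of `N` particles. -/
noncomputable def empMeas {d N : ℕ} (x : Fin N → Fin d) : Fin d → ℝ :=
  fun z => (∑ i, if x i = z then (1 : ℝ) else 0) / N

/-- Generator of the `N`-particle Markov chain. -/
noncomputable def genQ {d N : ℕ} (α : (Fin d → ℝ) → Matrix (Fin d) (Fin d) ℝ)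
    (F : (Fin N → Fin d) → ℝ) (x : Fin N → Fin d) : ℝ :=
  ∑ i, ∑ y ∈ Finset.univ.filter (fun y => y ≠ x i),
    α (empMeas x) (x i) y * (F (Function.update x i y) - F x)

/-- `p` is the law of the `N`-particle chain: a curve of probability vectors solving the
forward Kolmogorov equation (in weak form, tested against all functions). -/
def IsLaw {d N : ℕ} (α : (Fin d → ℝ) → Matrix (Fin d) (Fin d) ℝ)
    (p : ℝ → (Fin N → Fin d) → ℝ) : Prop :=
  (∀ t, 0 ≤ t → (∀ x, 0 ≤ p t x) ∧ (∑ x, p t x) = 1) ∧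
  (∀ F : (Fin N → Fin d) → ℝ, ∀ t, 0 ≤ t →
    HasDerivAt (fun s => ∑ x, p s x * F x) (∑ x, p t x * genQ α F x) t)

/-- The linearized Kolmogorov operator `L_η`. -/
def linOp {d : ℕ} (α : (Fin d → ℝ) → Matrix (Fin d) (Fin d) ℝ)
    (δα : (Fin d → ℝ) → Fin d → Matrix (Fin d) (Fin d) ℝ)
    (η q : Fin d → ℝ) : Fin d → ℝ :=
  Matrix.vecMul η (∑ z, q z • δα η z) + Matrix.vecMul q (α η)

/-- The linearized ergodicity assumption (Lin-Erg) with constants `lam`, `c₂`. -/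
def LinErg {d : ℕ} (α : (Fin d → ℝ) → Matrix (Fin d) (Fin d) ℝ)
    (δα : (Fin d → ℝ) → Fin d → Matrix (Fin d) (Fin d) ℝ)
    (m : ℝ → (Fin d → ℝ) → Fin d → ℝ) (lam c₂ : ℝ) : Prop :=
  ∀ μ ∈ simplex d, ∀ q₀ : Fin d → ℝ, (∑ z, q₀ z) = 0 →
    ∀ r : ℝ → Fin d → ℝ, Measurable r → (∃ Cb : ℝ, ∀ t, 0 ≤ t → l1 (r t) ≤ Cb) →
      (∀ t, 0 ≤ t → (∑ z, r t z) = 0) →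
      ∀ q : ℝ → Fin d → ℝ, q 0 = q₀ →
        (∀ t, 0 ≤ t → HasDerivAt q (linOp α δα (m t μ) (q t) + r t) t) →
        ∀ t, 0 ≤ t →
          l1 (q t) ≤ c₂ * (Real.exp (-lam * t) * l1 q₀ +
            ∫ s in (0:ℝ)..t, Real.exp (-lam * (t - s)) * l1 (r s))

/-! ### The simplex and the ℓ¹ norm -/

lemma l1_nonneg {d : ℕ} (v : Fin d → ℝ) : 0 ≤ l1 v :=
  Finset.sum_nonneg fun _ _ => abs_nonneg _

lemma l1_smul {d : ℕ} (a : ℝ) (v : Fin d → ℝ) : l1 (a • v) = |a| * l1 v := by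
  simp [l1, abs_mul, Finset.mul_sum]

lemma l1_add_le {d : ℕ} (v w : Fin d → ℝ) : l1 (v + w) ≤ l1 v + l1 w := by
  simp only [l1, ← Finset.sum_add_distrib, Pi.add_apply]
  exact Finset.sum_le_sum fun _ _ => abs_add_le _ _

lemma l1_neg {d : ℕ} (v : Fin d → ℝ) : l1 (-v) = l1 v := by simp [l1]

lemma l1_sub_comm {d : ℕ} (v w : Fin d → ℝ) : l1 (v - w) = l1 (w - v) := by
  rw [← l1_neg, neg_sub]

lemma abs_le_l1 {d : ℕ} (v : Fin d → ℝ) (z : Fin d) : |v z| ≤ l1 v :=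
  Finset.single_le_sum (f := fun z => |v z|) (fun _ _ => abs_nonneg _) (Finset.mem_univ z)

lemma l1_sum_le {d : ℕ} {ι : Type*} (s : Finset ι) (f : ι → Fin d → ℝ) :
    l1 (∑ i ∈ s, f i) ≤ ∑ i ∈ s, l1 (f i) := by
  classical
  induction s using Finset.induction_on with
  | empty => simp [l1]
  | insert a s ha ih =>
    rw [Finset.sum_insert ha, Finset.sum_insert ha]
    exact (l1_add_le _ _).trans (by gcongr)

lemma l1_le_of_abs_le {d : ℕ} {v : Fin d → ℝ} {B : ℝ} (h : ∀ z, |v z| ≤ B) : l1 v ≤ d * B := by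
  refine (Finset.sum_le_sum fun z _ => h z).trans ?_
  simp

lemma abs_dotProduct_le {d : ℕ} {v w : Fin d → ℝ} {B : ℝ} (h : ∀ z, |w z| ≤ B) :
    |v ⬝ᵥ w| ≤ l1 v * B := by
  rw [dotProduct, l1, Finset.sum_mul]
  refine (Finset.abs_sum_le_sum_abs _ _).trans (Finset.sum_le_sum fun z _ => ?_)
  rw [abs_mul]
  exact mul_le_mul_of_nonneg_left (h z) (abs_nonneg _)

lemma l1_of_mem {d : ℕ} {μ : Fin d → ℝ} (hμ : μ ∈ simplex d) : l1 μ = 1 := by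
  rw [← hμ.2]
  exact Finset.sum_congr rfl fun z _ => abs_of_nonneg (hμ.1 z)

lemma l1_sub_le_two {d : ℕ} {μ ν : Fin d → ℝ} (hμ : μ ∈ simplex d) (hν : ν ∈ simplex d) :
    l1 (μ - ν) ≤ 2 := by
  have := l1_add_le μ (-ν)
  rw [l1_neg, l1_of_mem hμ, l1_of_mem hν, ← sub_eq_add_neg] at this
  linarith

lemma bvec_mem {d : ℕ} (z : Fin d) : bvec z ∈ simplex d := by
  constructor
  · intro y
    unfold bvec
    split_ifs <;> norm_num
  · simp [bvec]

lemma le_one_of_mem {d : ℕ} {μ : Fin d → ℝ} (hμ : μ ∈ simplex d) (z : Fin d) : μ z ≤ 1 := by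
  rw [← hμ.2]
  exact Finset.single_le_sum (fun y _ => hμ.1 y) (Finset.mem_univ z)

lemma mix_mem {d : ℕ} {μ ν : Fin d → ℝ} (hμ : μ ∈ simplex d) (hν : ν ∈ simplex d) {s : ℝ}
    (h0 : 0 ≤ s) (h1 : s ≤ 1) : (1 - s) • μ + s • ν ∈ simplex d := by
  constructor
  · intro z
    have := hμ.1 z
    have := hν.1 z
    have : 0 ≤ 1 - s := by linarith
    simp only [Pi.add_apply, Pi.smul_apply, smul_eq_mul]
    positivity
  · simp [Finset.sum_add_distrib, ← Finset.mul_sum, hμ.2, hν.2]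

/-! ### Second-order expansion of functions in (D-Lip) -/

/-- The class (D-Lip) with explicit constants: `F` is `L`-Lipschitz on the simplex, and its linear
functional derivative `δF` exists and is `K`-Lipschitz in the measure, for each fixed `z`. -/
structure DLipC {d : ℕ} (F : (Fin d → ℝ) → ℝ) (δF : (Fin d → ℝ) → Fin d → ℝ) (L K : ℝ) :
    Prop where
  L_nonneg : 0 ≤ L
  K_nonneg : 0 ≤ K
  lip : ∀ μ ∈ simplex d, ∀ ν ∈ simplex d, |F μ - F ν| ≤ L * l1 (μ - ν)
  deriv : ∀ μ ∈ simplex d, ∀ z, HasLFDerivAt F μ z (δF μ z)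
  lip_deriv : ∀ μ ∈ simplex d, ∀ ν ∈ simplex d, ∀ z, |δF μ z - δF ν z| ≤ K * l1 (μ - ν)

lemma DLipR.exists_DLipC {d : ℕ} {F : (Fin d → ℝ) → ℝ} {δF : (Fin d → ℝ) → Fin d → ℝ}
    (h : DLipR F δF) : ∃ L K, DLipC F δF L K := by
  obtain ⟨⟨L, hL⟩, hD, ⟨K, hK⟩⟩ := h
  refine ⟨|L|, |K|, abs_nonneg _, abs_nonneg _, fun μ hμ ν hν => ?_, hD, fun μ hμ ν hν z => ?_⟩
  · exact (hL μ hμ ν hν).trans (mul_le_mul_of_nonneg_right (le_abs_self _) (l1_nonneg _))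
  · exact ((abs_le_l1 (δF μ - δF ν) z).trans (hK μ hμ ν hν)).trans
      (mul_le_mul_of_nonneg_right (le_abs_self _) (l1_nonneg _))

lemma DLipC.abs_deriv_le {d : ℕ} {F : (Fin d → ℝ) → ℝ} {δF : (Fin d → ℝ) → Fin d → ℝ} {L K : ℝ}
    (h : DLipC F δF L K) {μ : Fin d → ℝ} (hμ : μ ∈ simplex d) (z : Fin d) : |δF μ z| ≤ 2 * L := by
  refine le_of_tendsto (h.deriv μ hμ z).abs ?_
  filter_upwards [Ioo_mem_nhdsGT (zero_lt_one' ℝ)] with ε hε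
  rw [abs_div, abs_of_pos hε.1, div_le_iff₀ hε.1]
  refine (h.lip _ (mix_mem hμ (bvec_mem z) hε.1.le hε.2.le) μ hμ).trans ?_
  have : (1 - ε) • μ + ε • bvec z - μ = ε • (bvec z - μ) := by
    module
  rw [this, l1_smul, abs_of_pos hε.1]
  have := l1_sub_le_two (bvec_mem z) hμ
  have := h.L_nonneg
  have := hε.1
  calc L * (ε * l1 (bvec z - μ)) ≤ L * (ε * 2) := by gcongr
    _ = 2 * L * ε := by ring

lemma l1_mix_sub {d : ℕ} (μ ν : Fin d → ℝ) {s : ℝ} (hs : 0 ≤ s) :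
    l1 ((1 - s) • μ + s • ν - μ) = s * l1 (ν - μ) := by
  have : (1 - s) • μ + s • ν - μ = s • (ν - μ) := by module
  rw [this, l1_smul, abs_of_nonneg hs]

/-- If `D η` is the one-sided derivative at every `η` in the direction of `ν`, it gives the right
derivative along the whole segment from `η` to `ν`; the factor `1 / (1 - s)` accounts for
the remaining length of the segment. -/
lemma hasDerivWithinAt_segment {d : ℕ} {F : (Fin d → ℝ) → ℝ} {D : (Fin d → ℝ) → ℝ}
    {ν : Fin d → ℝ} (hν : ν ∈ simplex d)
    (hD : ∀ η ∈ simplex d, Tendsto (fun ε : ℝ => (F ((1 - ε) • η + ε • ν) - F η) / ε)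
      (𝓝[>] 0) (𝓝 (D η)))
    {η : Fin d → ℝ} (hη : η ∈ simplex d) {s : ℝ} (h0 : 0 ≤ s) (h1 : s < 1) :
    HasDerivWithinAt (fun s : ℝ => F ((1 - s) • η + s • ν))
      (D ((1 - s) • η + s • ν) / (1 - s)) (Set.Ici s) s := by
  rw [← hasDerivWithinAt_Ioi_iff_Ici, hasDerivWithinAt_iff_tendsto_slope' (by simp)]
  have h1s : 0 < 1 - s := by linarith
  have hε : Tendsto (fun s' : ℝ => (s' - s) / (1 - s)) (𝓝[>] s) (𝓝[>] 0) := by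
    refine tendsto_nhdsWithin_iff.2 ⟨?_, ?_⟩
    · have : Tendsto (fun s' : ℝ => (s' - s) / (1 - s)) (𝓝 s) (𝓝 ((s - s) / (1 - s))) := by
        apply Continuous.tendsto
        fun_prop
      rw [sub_self, zero_div] at this
      exact this.mono_left nhdsWithin_le_nhds
    · filter_upwards [self_mem_nhdsWithin] with s' hs'
      exact div_pos (sub_pos.2 hs') h1s
  have key := ((hD _ (mix_mem hη hν h0 h1.le)).comp hε).div_const (1 - s)
  refine key.congr' ?_
  filter_upwards [self_mem_nhdsWithin] with s' hs'
  have hs'' : 0 < s' - s := sub_pos.2 hs'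
  have e : (1 - (s' - s) / (1 - s)) • ((1 - s) • η + s • ν) + ((s' - s) / (1 - s)) • ν
      = (1 - s') • η + s' • ν := by
    ext z
    simp only [Pi.add_apply, Pi.smul_apply, smul_eq_mul]
    field_simp
    ring
  simp only [Function.comp_apply, e, slope, vsub_eq_sub, smul_eq_mul]
  field_simp

/-- Mean value inequality along a segment of the simplex. -/
lemma segment_mean_value {d : ℕ} {F : (Fin d → ℝ) → ℝ} {D : (Fin d → ℝ) → ℝ} {L : ℝ}
    (hL : ∀ μ ∈ simplex d, ∀ ν ∈ simplex d, |F μ - F ν| ≤ L * l1 (μ - ν))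
    {ν : Fin d → ℝ} (hν : ν ∈ simplex d)
    (hD : ∀ η ∈ simplex d, Tendsto (fun ε : ℝ => (F ((1 - ε) • η + ε • ν) - F η) / ε)
      (𝓝[>] 0) (𝓝 (D η)))
    {η : Fin d → ℝ} (hη : η ∈ simplex d) {τ B c : ℝ} (h0 : 0 ≤ τ) (h1 : τ ≤ 1)
    (hB : ∀ s, 0 ≤ s → s < τ → |D ((1 - s) • η + s • ν) / (1 - s) - c| ≤ B) :
    |F ((1 - τ) • η + τ • ν) - F η - τ * c| ≤ B * τ := by
  have hcont : ContinuousOn (fun s : ℝ => F ((1 - s) • η + s • ν)) (Set.Icc 0 τ) := by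
    have hlip : LipschitzOnWith (L.toNNReal * (l1 (ν - η)).toNNReal)
        (fun s : ℝ => F ((1 - s) • η + s • ν)) (Set.Icc 0 τ) := by
      refine LipschitzOnWith.of_dist_le_mul fun a ha b hb => ?_
      rw [Real.dist_eq, Real.dist_eq]
      refine (hL _ (mix_mem hη hν ha.1 (ha.2.trans h1)) _
        (mix_mem hη hν hb.1 (hb.2.trans h1))).trans ?_
      have : (1 - a) • η + a • ν - ((1 - b) • η + b • ν) = (a - b) • (ν - η) := by module
      rw [this, l1_smul, NNReal.coe_mul, Real.coe_toNNReal _ (l1_nonneg _)]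
      have := Real.le_coe_toNNReal L
      have := l1_nonneg (ν - η)
      calc L * (|a - b| * l1 (ν - η)) ≤ (L.toNNReal : ℝ) * (|a - b| * l1 (ν - η)) := by gcongr
        _ = _ := by ring
    exact hlip.continuousOn
  have key := norm_image_sub_le_of_norm_deriv_right_le_segment (a := 0) (b := τ)
    (f := fun s : ℝ => F ((1 - s) • η + s • ν) - s * c)
    (f' := fun s => D ((1 - s) • η + s • ν) / (1 - s) - c) (C := B)
    (hcont.sub (by fun_prop))
    (fun s hs => by
      have h2 : HasDerivWithinAt (fun s : ℝ => s * c) c (Set.Ici s) s := by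
        simpa using ((hasDerivAt_id s).mul_const c).hasDerivWithinAt
      exact (hasDerivWithinAt_segment hν hD hη hs.1 (hs.2.trans_le h1)).sub h2)
    (fun s hs => hB s hs.1 hs.2) τ ⟨h0, le_rfl⟩
  simp only [Real.norm_eq_abs, sub_zero, one_smul, zero_smul, add_zero, zero_mul] at key
  convert key using 2
  ring

lemma DLipC.vertex_taylor {d : ℕ} {F : (Fin d → ℝ) → ℝ} {δF : (Fin d → ℝ) → Fin d → ℝ} {L K : ℝ}
    (h : DLipC F δF L K) {η : Fin d → ℝ} (hη : η ∈ simplex d) (z : Fin d) {τ : ℝ}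
    (h0 : 0 ≤ τ) (h1 : τ ≤ 1 / 2) :
    |F ((1 - τ) • η + τ • bvec z) - F η - τ * δF η z| ≤ 4 * (K + L) * τ * τ := by
  refine segment_mean_value (D := fun η => δF η z) h.lip (bvec_mem z)
    (fun η hη => h.deriv η hη z) hη h0 (by linarith) fun s hs0 hs1 => ?_
  have hK := h.K_nonneg
  have hL := h.L_nonneg
  have hmem := mix_mem hη (bvec_mem z) hs0 (by linarith)
  have e1 := h.lip_deriv _ hmem η hη z
  rw [l1_mix_sub _ _ hs0] at e1
  have e1' : |δF ((1 - s) • η + s • bvec z) z - δF η z| ≤ K * (s * 2) := by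
    refine e1.trans ?_
    have := l1_sub_le_two (bvec_mem z) hη
    gcongr
  have e2 := h.abs_deriv_le hη z
  have hs : 0 < 1 - s := by linarith
  have : δF ((1 - s) • η + s • bvec z) z / (1 - s) - δF η z
      = (δF ((1 - s) • η + s • bvec z) z - δF η z + s * δF η z) / (1 - s) := by
    field_simp
    ring
  rw [this, abs_div, abs_of_pos hs, div_le_iff₀ hs]
  have e3 : |s * δF η z| ≤ s * (2 * L) := by
    rw [abs_mul, abs_of_nonneg hs0]
    gcongr
  have e4 : 2 * (K + L) * s ≤ 2 * (K + L) * τ := by gcongr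
  have e5 : 4 * (K + L) * τ * (1 / 2) ≤ 4 * (K + L) * τ * (1 - s) := by
    gcongr
    linarith
  linarith [abs_add_le (δF ((1 - s) • η + s • bvec z) z - δF η z) (s * δF η z)]

/-- Moving from `η` towards several vertices at once with weights `ν`, one vertex after the other;
the one-sided derivative is additive up to a quadratic error. -/
lemma DLipC.multi_taylor {d : ℕ} {F : (Fin d → ℝ) → ℝ} {δF : (Fin d → ℝ) → Fin d → ℝ} {L K : ℝ}
    (h : DLipC F δF L K) (S : Finset (Fin d)) :
    ∃ C : ℝ, ∀ η ∈ simplex d, ∀ ν ∈ simplex d, ∀ τ : ℝ, 0 ≤ τ → τ ≤ 1 / 2 →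
      |F (η + τ • ∑ z ∈ S, ν z • (bvec z - η)) - F η - τ * ∑ z ∈ S, ν z * δF η z|
        ≤ C * τ * τ := by
  have hK := h.K_nonneg
  have hL := h.L_nonneg
  induction S using Finset.induction_on with
  | empty => exact ⟨0, by simp⟩
  | insert z S hz ih =>
    obtain ⟨C, hC⟩ := ih
    refine ⟨C + 2 * L + 4 * (K + L) + 2 * K, fun η hη ν hν τ h0 h1 => ?_⟩
    have hsub : ∀ S : Finset (Fin d), ∑ z ∈ S, ν z ≤ 1 := fun S => by
      rw [← hν.2]
      exact Finset.sum_le_sum_of_subset_of_nonneg (Finset.subset_univ _) fun i _ _ => hν.1 i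
    have hmem : ∀ S : Finset (Fin d), η + τ • ∑ z ∈ S, ν z • (bvec z - η) ∈ simplex d := by
      intro S
      constructor
      · intro y
        have e : (η + τ • ∑ z ∈ S, ν z • (bvec z - η)) y
            = (1 - τ * ∑ z ∈ S, ν z) * η y + τ * ∑ z ∈ S, ν z * bvec z y := by
          simp only [Pi.add_apply, Pi.smul_apply, Finset.sum_apply, Pi.sub_apply, smul_eq_mul,
            mul_sub, Finset.sum_sub_distrib, ← Finset.sum_mul]
          ring
        rw [e]
        have a1 : 0 ≤ 1 - τ * ∑ z ∈ S, ν z := by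
          have : τ * ∑ z ∈ S, ν z ≤ τ * 1 := mul_le_mul_of_nonneg_left (hsub S) h0
          linarith
        have a2 : 0 ≤ ∑ z ∈ S, ν z * bvec z y :=
          Finset.sum_nonneg fun z _ => mul_nonneg (hν.1 z) ((bvec_mem z).1 y)
        have := hη.1 y
        positivity
      · simp only [Pi.add_apply, Pi.smul_apply, Finset.sum_apply, Pi.sub_apply, smul_eq_mul,
          Finset.sum_add_distrib, ← Finset.mul_sum]
        rw [Finset.sum_comm]
        simp [← Finset.mul_sum, Finset.sum_sub_distrib, hη.2, (bvec_mem _).2]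
    have ih' := hC η hη ν hν τ h0 h1
    have hρ := hmem S
    have hρ' := hmem (insert z S)
    rw [Finset.sum_insert hz] at hρ' ⊢
    rw [Finset.sum_insert hz]
    have hdist : l1 (η + τ • ∑ z ∈ S, ν z • (bvec z - η) - η) ≤ τ * 2 := by
      rw [add_sub_cancel_left, l1_smul, abs_of_nonneg h0]
      refine mul_le_mul_of_nonneg_left ((l1_sum_le _ _).trans ?_) h0
      calc ∑ i ∈ S, l1 (ν i • (bvec i - η)) ≤ ∑ i ∈ S, ν i * 2 := by
            refine Finset.sum_le_sum fun i _ => ?_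
            rw [l1_smul, abs_of_nonneg (hν.1 i)]
            exact mul_le_mul_of_nonneg_left (l1_sub_le_two (bvec_mem i) hη) (hν.1 i)
        _ ≤ 2 := by
            rw [← Finset.sum_mul]
            linarith [hsub S]
    set σ := ∑ z ∈ S, ν z • (bvec z - η) with hσ
    set ρ := η + τ • σ with hρdef
    set a := ν z with ha
    have a0 : 0 ≤ a := hν.1 z
    have a1 : a ≤ 1 := le_one_of_mem hν z
    have t0 : 0 ≤ τ * a := mul_nonneg h0 a0
    have t1 : τ * a ≤ τ := mul_le_of_le_one_right h0 a1
    have hρ'' := mix_mem hρ (bvec_mem z) t0 (by linarith)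
    have s1 := h.lip _ hρ' _ hρ''
    have e1 : η + τ • (a • (bvec z - η) + σ) - ((1 - τ * a) • ρ + (τ * a) • bvec z)
        = (τ * a) • (ρ - η) := by
      rw [hρdef]
      module
    rw [e1, l1_smul, abs_of_nonneg t0] at s1
    have s1' : L * (τ * a * l1 (ρ - η)) ≤ L * (τ * (τ * 2)) := by gcongr; exact l1_nonneg _
    have s2 := h.vertex_taylor hρ z t0 (by linarith)
    have s2' : 4 * (K + L) * (τ * a) * (τ * a) ≤ 4 * (K + L) * τ * τ := by gcongr
    have s3 : |τ * a * (δF ρ z - δF η z)| ≤ τ * (K * (τ * 2)) := by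
      rw [abs_mul, abs_of_nonneg t0]
      refine mul_le_mul t1 ((h.lip_deriv ρ hρ η hη z).trans ?_) (abs_nonneg _) h0
      gcongr
    rw [abs_le] at *
    constructor <;> nlinarith

/-- The one-sided derivative in the direction of an arbitrary `ν` is the `ν`-average of the
derivatives towards the vertices. -/
lemma DLipC.tendsto_dir {d : ℕ} {F : (Fin d → ℝ) → ℝ} {δF : (Fin d → ℝ) → Fin d → ℝ} {L K : ℝ}
    (h : DLipC F δF L K) {η ν : Fin d → ℝ} (hη : η ∈ simplex d) (hν : ν ∈ simplex d) :
    Tendsto (fun ε : ℝ => (F ((1 - ε) • η + ε • ν) - F η) / ε) (𝓝[>] 0) (𝓝 (ν ⬝ᵥ δF η)) := by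
  obtain ⟨C, hC⟩ := h.multi_taylor Finset.univ
  rw [tendsto_iff_norm_sub_tendsto_zero]
  have hlim : Tendsto (fun ε : ℝ => C * ε) (𝓝[>] 0) (𝓝 0) := by
    have : Tendsto (fun ε : ℝ => C * ε) (𝓝 0) (𝓝 (C * 0)) := by
      apply Continuous.tendsto
      fun_prop
    rw [mul_zero] at this
    exact this.mono_left nhdsWithin_le_nhds
  refine squeeze_zero' (Eventually.of_forall fun _ => norm_nonneg _) ?_ hlim
  filter_upwards [Ioo_mem_nhdsGT (show (0 : ℝ) < 1 / 2 by norm_num)] with τ hτ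
  have key := hC η hη ν hν τ hτ.1.le hτ.2.le
  have hτ0 := hτ.1
  have e : η + τ • ∑ z, ν z • (bvec z - η) = (1 - τ) • η + τ • ν := by
    ext y
    simp only [Pi.add_apply, Pi.smul_apply, Finset.sum_apply, Pi.sub_apply, smul_eq_mul,
      mul_sub, Finset.sum_sub_distrib, ← Finset.sum_mul, hν.2]
    simp [bvec]
    ring
  rw [e] at key
  have e2 : (F ((1 - τ) • η + τ • ν) - F η) / τ - ν ⬝ᵥ δF η
      = (F ((1 - τ) • η + τ • ν) - F η - τ * ∑ z, ν z * δF η z) / τ := by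
    rw [dotProduct]
    field_simp
  rw [e2, Real.norm_eq_abs, abs_div, abs_of_pos hτ0, div_le_iff₀ hτ0]
  exact key

/-- Normalisation of the linear functional derivative: moving from `η` towards `η` is no move. -/
lemma DLipC.dot_self {d : ℕ} {F : (Fin d → ℝ) → ℝ} {δF : (Fin d → ℝ) → Fin d → ℝ} {L K : ℝ}
    (h : DLipC F δF L K) {η : Fin d → ℝ} (hη : η ∈ simplex d) : η ⬝ᵥ δF η = 0 := by
  have h1 := h.tendsto_dir hη hη
  have h2 : Tendsto (fun ε : ℝ => (F ((1 - ε) • η + ε • η) - F η) / ε) (𝓝[>] 0) (𝓝 0) := by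
    have : ∀ ε : ℝ, (1 - ε) • η + ε • η = η := fun ε => by module
    simp [this]
  exact tendsto_nhds_unique h1 h2

lemma DLipC.taylor {d : ℕ} {F : (Fin d → ℝ) → ℝ} {δF : (Fin d → ℝ) → Fin d → ℝ} {L K : ℝ}
    (h : DLipC F δF L K) {μ ν : Fin d → ℝ} (hμ : μ ∈ simplex d) (hν : ν ∈ simplex d) :
    |F ν - F μ - (ν - μ) ⬝ᵥ δF μ| ≤ K * l1 (ν - μ) ^ 2 := by
  have hK := h.K_nonneg
  have key := segment_mean_value (D := fun η => ν ⬝ᵥ δF η) (c := (ν - μ) ⬝ᵥ δF μ) (τ := 1)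
    (B := K * l1 (ν - μ) ^ 2) h.lip hν (fun η hη => h.tendsto_dir hη hν) hμ zero_le_one le_rfl
    fun s hs0 hs1 => by
      have hmem := mix_mem hμ hν hs0 hs1.le
      have hn := h.dot_self hmem
      have hs : 0 < 1 - s := by linarith
      have e : ν ⬝ᵥ δF ((1 - s) • μ + s • ν) / (1 - s) = (ν - μ) ⬝ᵥ δF ((1 - s) • μ + s • ν) := by
        rw [add_dotProduct, smul_dotProduct, smul_dotProduct, smul_eq_mul, smul_eq_mul] at hn
        rw [sub_dotProduct, div_eq_iff hs.ne']
        linear_combination hn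
      rw [e, ← dotProduct_sub]
      have : ∀ z, |(δF ((1 - s) • μ + s • ν) - δF μ) z| ≤ K * l1 (ν - μ) := fun z => by
        refine (h.lip_deriv _ hmem μ hμ z).trans ?_
        rw [l1_mix_sub _ _ hs0]
        refine mul_le_mul_of_nonneg_left ?_ hK
        exact mul_le_of_le_one_left (l1_nonneg _) hs1.le
      refine (abs_dotProduct_le this).trans (le_of_eq ?_)
      ring
  simpa using key

/-! ### The measure flow -/

lemma rate_bounds {d : ℕ} {α : (Fin d → ℝ) → Matrix (Fin d) (Fin d) ℝ}
    {δα : (Fin d → ℝ) → Fin d → Matrix (Fin d) (Fin d) ℝ} (hd : 1 < d) (hαD : DLipRate α δα) :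
    ∃ A : ℝ, 0 ≤ A ∧ (∀ μ ∈ simplex d, ∀ x y, |α μ x y| ≤ A) ∧
      ∀ μ ∈ simplex d, ∀ ν ∈ simplex d, ∀ x y, |α μ x y - α ν x y| ≤ A * l1 (μ - ν) := by
  have h : ∀ x y, ∃ L, 0 ≤ L ∧ ∀ μ ∈ simplex d, ∀ ν ∈ simplex d,
      |α μ x y - α ν x y| ≤ L * l1 (μ - ν) := fun x y => by
    obtain ⟨L, K, hLK⟩ := (hαD x y).exists_DLipC
    exact ⟨L, hLK.L_nonneg, hLK.lip⟩
  choose L hL0 hL using h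
  set b : Fin d → ℝ := bvec ⟨0, by lia⟩ with hb
  have hbm : b ∈ simplex d := bvec_mem _
  set A : ℝ := ∑ x, ∑ y, (|α b x y| + 2 * L x y) with hA
  have hle : ∀ x y, |α b x y| + 2 * L x y ≤ A := fun x y => by
    have hn : ∀ x y, 0 ≤ |α b x y| + 2 * L x y := fun x y => by
      have := hL0 x y
      positivity
    exact (Finset.single_le_sum (f := fun y => |α b x y| + 2 * L x y) (fun y _ => hn x y)
      (Finset.mem_univ y)).trans (Finset.single_le_sum
        (f := fun x => ∑ y, (|α b x y| + 2 * L x y))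
        (fun x _ => Finset.sum_nonneg fun y _ => hn x y) (Finset.mem_univ x))
  refine ⟨A, ?_, fun μ hμ x y => ?_, fun μ hμ ν hν x y => ?_⟩
  · refine Finset.sum_nonneg fun x _ => Finset.sum_nonneg fun y _ => ?_
    have := hL0 x y
    positivity
  · have h1 := hL x y μ hμ b hbm
    have h2 : L x y * l1 (μ - b) ≤ L x y * 2 :=
      mul_le_mul_of_nonneg_left (l1_sub_le_two hμ hbm) (hL0 x y)
    have h3 := abs_sub_abs_le_abs_sub (α μ x y) (α b x y)
    linarith [hle x y]
  · refine (hL x y μ hμ ν hν).trans (mul_le_mul_of_nonneg_right ?_ (l1_nonneg _))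
    linarith [hle x y, abs_nonneg (α b x y), hL0 x y]

lemma drift_lipschitz {d : ℕ} {α : (Fin d → ℝ) → Matrix (Fin d) (Fin d) ℝ} {A : ℝ} (hA : 0 ≤ A)
    (h1 : ∀ μ ∈ simplex d, ∀ x y, |α μ x y| ≤ A)
    (h2 : ∀ μ ∈ simplex d, ∀ ν ∈ simplex d, ∀ x y, |α μ x y - α ν x y| ≤ A * l1 (μ - ν)) :
    LipschitzOnWith (2 * A * d).toNNReal (fun μ => Matrix.vecMul μ (α μ)) (simplex d) := by
  refine LipschitzOnWith.of_dist_le_mul fun μ hμ ν hν => ?_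
  rw [Real.coe_toNNReal _ (by positivity)]
  refine (dist_pi_le_iff (by positivity)).2 fun y => ?_
  rw [Real.dist_eq]
  have e : Matrix.vecMul μ (α μ) y - Matrix.vecMul ν (α ν) y
      = μ ⬝ᵥ (fun x => α μ x y - α ν x y) + (μ - ν) ⬝ᵥ (fun x => α ν x y) := by
    simp only [Matrix.vecMul, dotProduct, ← Finset.sum_sub_distrib, ← Finset.sum_add_distrib,
      Pi.sub_apply]
    exact Finset.sum_congr rfl fun x _ => by ring
  have b1 := abs_dotProduct_le (v := μ) (w := fun x => α μ x y - α ν x y)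
    fun x => h2 μ hμ ν hν x y
  have b2 := abs_dotProduct_le (v := μ - ν) (w := fun x => α ν x y) fun x => h1 ν hν x y
  rw [l1_of_mem hμ] at b1
  have b3 : l1 (μ - ν) ≤ d * dist μ ν := l1_le_of_abs_le fun z => by
    rw [Pi.sub_apply, ← Real.dist_eq]
    exact dist_le_pi_dist μ ν z
  rw [e]
  calc _ ≤ 2 * A * l1 (μ - ν) := by
        linarith [abs_add_le (μ ⬝ᵥ (fun x => α μ x y - α ν x y)) ((μ - ν) ⬝ᵥ (fun x => α ν x y))]
    _ ≤ 2 * A * (d * dist μ ν) := by gcongr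
    _ = _ := by ring

/-- Semigroup property of the flow, from uniqueness for the Kolmogorov equation. -/
lemma flow_add {d : ℕ} {α : (Fin d → ℝ) → Matrix (Fin d) (Fin d) ℝ}
    {m : ℝ → (Fin d → ℝ) → Fin d → ℝ} (hm : IsFlow α m) {K : NNReal}
    (hK : LipschitzOnWith K (fun μ => Matrix.vecMul μ (α μ)) (simplex d))
    {μ : Fin d → ℝ} (hμ : μ ∈ simplex d) {s t : ℝ} (hs : 0 ≤ s) (ht : 0 ≤ t) :
    m (t + s) μ = m t (m s μ) := by
  obtain ⟨-, hmem, hder⟩ := hm μ hμ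
  obtain ⟨h0', hmem', hder'⟩ := hm _ (hmem s hs)
  have hd1 : ∀ r, 0 ≤ r → HasDerivAt (fun r => m (r + s) μ)
      (Matrix.vecMul (m (r + s) μ) (α (m (r + s) μ))) r := fun r hr =>
    (hder (r + s) (by linarith)).comp_add_const r s
  have key := ODE_solution_unique_of_mem_Icc_right (v := fun _ μ => Matrix.vecMul μ (α μ))
    (s := fun _ => simplex d) (K := K) (f := fun r => m (r + s) μ) (g := fun r => m r (m s μ))
    (a := 0) (b := t) (fun _ _ => hK)
    (fun r hr => (hd1 r hr.1).continuousAt.continuousWithinAt)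
    (fun r hr => (hd1 r hr.1).hasDerivWithinAt)
    (fun r hr => hmem _ (by linarith [hr.1]))
    (fun r hr => (hder' r hr.1).continuousAt.continuousWithinAt)
    (fun r hr => (hder' r hr.1).hasDerivWithinAt)
    (fun r hr => hmem' _ hr.1) (by simp [h0'])
  exact key ⟨ht, le_rfl⟩

lemma Erg.dLipC {d : ℕ} {m : ℝ → (Fin d → ℝ) → Fin d → ℝ}
    {δm : ℝ → (Fin d → ℝ) → Fin d → Fin d → ℝ} {lam c₁ k₁ : ℝ} (h : Erg m δm lam c₁ k₁)
    {t : ℝ} (ht : 0 ≤ t) (x : Fin d) :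
    DLipC (fun μ => m t μ x) (fun μ z => δm t μ z x) (c₁ * Real.exp (-lam * t)) k₁ := by
  obtain ⟨-, hc, hk, h1, h2, h3⟩ := h
  refine ⟨by positivity, hk.le, fun μ hμ ν hν => ?_, fun μ hμ z => h2 t ht μ hμ z x,
    fun μ hμ ν hν z => ?_⟩
  · exact (abs_le_l1 (m t μ - m t ν) x).trans (h1 t ht μ hμ ν hν)
  · exact (abs_le_l1 (δm t μ z - δm t ν z) x).trans (h3 t ht μ hμ ν hν z)

lemma Erg.taylor {d : ℕ} {m : ℝ → (Fin d → ℝ) → Fin d → ℝ}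
    {δm : ℝ → (Fin d → ℝ) → Fin d → Fin d → ℝ} {lam c₁ k₁ : ℝ} (h : Erg m δm lam c₁ k₁)
    {t : ℝ} (ht : 0 ≤ t) {μ ν : Fin d → ℝ} (hμ : μ ∈ simplex d) (hν : ν ∈ simplex d) :
    l1 (m t ν - m t μ - Matrix.vecMul (ν - μ) (δm t μ)) ≤ d * (k₁ * l1 (ν - μ) ^ 2) :=
  l1_le_of_abs_le fun x => (h.dLipC ht x).taylor hμ hν

lemma Erg.l1_vecMul_le {d : ℕ} {m : ℝ → (Fin d → ℝ) → Fin d → ℝ}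
    {δm : ℝ → (Fin d → ℝ) → Fin d → Fin d → ℝ} {lam c₁ k₁ : ℝ} (h : Erg m δm lam c₁ k₁)
    {t : ℝ} (ht : 0 ≤ t) {μ : Fin d → ℝ} (hμ : μ ∈ simplex d) (q : Fin d → ℝ) :
    l1 (Matrix.vecMul q (δm t μ)) ≤ d * (l1 q * (2 * (c₁ * Real.exp (-lam * t)))) :=
  l1_le_of_abs_le fun x => abs_dotProduct_le fun z => (h.dLipC ht x).abs_deriv_le hμ z

/-- Second-order expansion of `μ ↦ Φ (m r μ)` with a remainder decaying exponentially in `r`.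
The Lipschitz bound on `δm` in (Erg) has no decay in time; it is gained by writing
`m r = m (r/2) ∘ m (r/2)`: the quadratic error of the inner flow is contracted by the
derivative of the outer one, and the error of the outer flow is quadratic in an already
contracted increment. -/
lemma taylor_decay {d : ℕ} {α : (Fin d → ℝ) → Matrix (Fin d) (Fin d) ℝ}
    {m : ℝ → (Fin d → ℝ) → Fin d → ℝ} {δm : ℝ → (Fin d → ℝ) → Fin d → Fin d → ℝ}
    {lam c₁ k₁ : ℝ} (hm : IsFlow α m) (hErg : Erg m δm lam c₁ k₁) {K : NNReal}
    (hK : LipschitzOnWith K (fun μ => Matrix.vecMul μ (α μ)) (simplex d))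
    {Φ : (Fin d → ℝ) → ℝ} {δΦ : (Fin d → ℝ) → Fin d → ℝ} {LΦ KΦ : ℝ} (hΦ : DLipC Φ δΦ LΦ KΦ) :
    ∃ C : ℝ, 0 ≤ C ∧ ∀ r, 0 ≤ r → ∃ ℓ : (Fin d → ℝ) → Fin d → ℝ,
      ∀ μ ∈ simplex d, ∀ ν ∈ simplex d,
        |Φ (m r ν) - Φ (m r μ) - (ν - μ) ⬝ᵥ ℓ μ|
          ≤ C * Real.exp (-(lam / 2) * r) * l1 (ν - μ) ^ 2 := by
  have hErg' := hErg
  obtain ⟨hlam, hc, hk, hcontr, -, -⟩ := hErg'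
  have hL0 := hΦ.L_nonneg
  have hK0 := hΦ.K_nonneg
  refine ⟨KΦ * c₁ ^ 4 + (d * (k₁ * c₁ ^ 2) + d * (d * k₁ * (2 * c₁))) * (2 * LΦ), by positivity,
    fun r hr => ?_⟩
  have hh : 0 ≤ r / 2 := by linarith
  set h := r / 2 with hhdef
  refine ⟨fun μ => Matrix.mulVec (δm h μ) (Matrix.mulVec (δm h (m h μ)) (δΦ (m r μ))),
    fun μ hμ ν hν => ?_⟩
  have hμ1 := (hm μ hμ).2.1 h hh
  have hν1 := (hm ν hν).2.1 h hh
  have hμ2 := (hm _ hμ1).2.1 h hh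
  have hν2 := (hm _ hν1).2.1 h hh
  have hrh : r = h + h := by rw [hhdef]; ring
  have eμ : m r μ = m h (m h μ) := by rw [hrh]; exact flow_add hm hK hμ hh hh
  have eν : m r ν = m h (m h ν) := by rw [hrh]; exact flow_add hm hK hν hh hh
  have hexp : Real.exp (-(lam / 2) * r) = Real.exp (-lam * h) := by
    congr 1
    rw [hhdef]
    ring
  have c1 := hcontr h hh ν hν μ hμ
  have c2 := hcontr h hh _ hν1 _ hμ1
  have r1 := hErg.taylor hh hμ hν
  have r2 := hErg.taylor hh hμ1 hν1
  have r3 := hErg.l1_vecMul_le hh hμ1 (m h ν - m h μ - Matrix.vecMul (ν - μ) (δm h μ))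
  have rΦ := hΦ.taylor hμ2 hν2
  have rδ := abs_dotProduct_le (v := m h (m h ν) - m h (m h μ)
      - Matrix.vecMul (Matrix.vecMul (ν - μ) (δm h μ)) (δm h (m h μ)))
    fun z => hΦ.abs_deriv_le hμ2 z
  have el := l1_add_le
    (m h (m h ν) - m h (m h μ) - Matrix.vecMul (m h ν - m h μ) (δm h (m h μ)))
    (Matrix.vecMul (m h ν - m h μ - Matrix.vecMul (ν - μ) (δm h μ)) (δm h (m h μ)))
  have hsv : Matrix.vecMul (m h ν - m h μ - Matrix.vecMul (ν - μ) (δm h μ)) (δm h (m h μ))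
      = Matrix.vecMul (m h ν - m h μ) (δm h (m h μ))
        - Matrix.vecMul (Matrix.vecMul (ν - μ) (δm h μ)) (δm h (m h μ)) := Matrix.sub_vecMul _ _ _
  rw [hsv, sub_add_sub_cancel] at el
  rw [hsv] at r3
  have hdot : (ν - μ) ⬝ᵥ Matrix.mulVec (δm h μ) (Matrix.mulVec (δm h (m h μ)) (δΦ (m r μ)))
      = Matrix.vecMul (Matrix.vecMul (ν - μ) (δm h μ)) (δm h (m h μ)) ⬝ᵥ δΦ (m r μ) :=
    (Matrix.dotProduct_mulVec _ _ _).trans (Matrix.dotProduct_mulVec _ _ _)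
  beta_reduce
  rw [hdot, eμ, eν, hexp]
  have he0 : 0 < Real.exp (-lam * h) := Real.exp_pos _
  have he1 : Real.exp (-lam * h) ≤ 1 := Real.exp_le_one_iff.2 (by nlinarith)
  set e := Real.exp (-lam * h) with hedef
  set Q := l1 (ν - μ) with hQ
  have hQ0 : 0 ≤ Q := l1_nonneg _
  set w := Matrix.vecMul (Matrix.vecMul (ν - μ) (δm h μ)) (δm h (m h μ)) with hw
  set q1 := l1 (m h ν - m h μ) with hq1
  have hq10 : 0 ≤ q1 := l1_nonneg _
  set q2 := l1 (m h (m h ν) - m h (m h μ)) with hq2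
  have hq20 : 0 ≤ q2 := l1_nonneg _
  have hee : e ^ 2 ≤ e := by nlinarith
  have hee4 : e ^ 4 ≤ e := by nlinarith [sq_nonneg e]
  have b2 : q2 ^ 2 ≤ c₁ ^ 4 * e * Q ^ 2 := by
    have : q2 ≤ c₁ * e * (c₁ * e * Q) := c2.trans (by gcongr)
    calc q2 ^ 2 ≤ (c₁ * e * (c₁ * e * Q)) ^ 2 := by gcongr
      _ = c₁ ^ 4 * e ^ 4 * Q ^ 2 := by ring
      _ ≤ _ := by gcongr
  have b1 : q1 ^ 2 ≤ c₁ ^ 2 * e * Q ^ 2 := by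
    calc q1 ^ 2 ≤ (c₁ * e * Q) ^ 2 := by gcongr
      _ = c₁ ^ 2 * e ^ 2 * Q ^ 2 := by ring
      _ ≤ _ := by gcongr
  have b3 : l1 (m h (m h ν) - m h (m h μ) - w)
      ≤ (d * (k₁ * c₁ ^ 2) + d * (d * k₁ * (2 * c₁))) * e * Q ^ 2 := by
    refine (el.trans (add_le_add r2 r3)).trans ?_
    calc _ ≤ d * (k₁ * (c₁ ^ 2 * e * Q ^ 2)) + d * (d * (k₁ * Q ^ 2) * (2 * (c₁ * e))) := by gcongr
      _ = _ := by ring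
  have b4 := mul_le_mul_of_nonneg_right b3 (show 0 ≤ 2 * LΦ by positivity)
  have b5 := mul_le_mul_of_nonneg_left b2 hK0
  have split : Φ (m h (m h ν)) - Φ (m h (m h μ)) - w ⬝ᵥ δΦ (m h (m h μ))
      = (Φ (m h (m h ν)) - Φ (m h (m h μ))
          - (m h (m h ν) - m h (m h μ)) ⬝ᵥ δΦ (m h (m h μ)))
        + (m h (m h ν) - m h (m h μ) - w) ⬝ᵥ δΦ (m h (m h μ)) := by
    rw [sub_dotProduct (m h (m h ν) - m h (m h μ)) w]
    ring
  rw [split]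
  refine (abs_add_le _ _).trans ((add_le_add (rΦ.trans b5) (rδ.trans b4)).trans (le_of_eq ?_))
  ring

/-! ### The particle system -/

lemma sum_empMeas {d N : ℕ} (x : Fin N → Fin d) (f : Fin d → ℝ) :
    empMeas x ⬝ᵥ f = (∑ i, f (x i)) / N := by
  simp only [dotProduct, empMeas, div_mul_eq_mul_div, ← Finset.sum_div, Finset.sum_mul]
  rw [Finset.sum_comm]
  simp

lemma empMeas_mem {d N : ℕ} (hN : 1 ≤ N) (x : Fin N → Fin d) : empMeas x ∈ simplex d := by
  have hN' : (N : ℝ) ≠ 0 := by positivity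
  constructor
  · intro z
    exact div_nonneg (Finset.sum_nonneg fun i _ => by split_ifs <;> norm_num) (Nat.cast_nonneg _)
  · have := sum_empMeas x (fun _ => 1)
    simpa [dotProduct, hN'] using this

lemma empMeas_update {d N : ℕ} (x : Fin N → Fin d) (i : Fin N) (y : Fin d) :
    empMeas (Function.update x i y) - empMeas x = (1 / (N : ℝ)) • (bvec y - bvec (x i)) := by
  ext z
  simp only [empMeas, Pi.sub_apply, Pi.smul_apply, smul_eq_mul, bvec, ← sub_div,
    ← Finset.sum_sub_distrib]
  rw [Finset.sum_eq_single i]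
  · simp only [Function.update_self, eq_comm]
    ring
  · intro j _ hj
    simp [Function.update_of_ne hj]
  · simp

/-- The generator acts on functions of the empirical measure as the drift of the Kolmogorov
equation, up to an error of order `1/N` controlled by the quadratic remainder. -/
lemma genQ_approx {d N : ℕ} (hN : 1 ≤ N) {α : (Fin d → ℝ) → Matrix (Fin d) (Fin d) ℝ}
    (hα : IsRate d α) {A : ℝ} (hA : 0 ≤ A) (h1 : ∀ μ ∈ simplex d, ∀ x y, |α μ x y| ≤ A)
    {G : (Fin d → ℝ) → ℝ} {ℓ : (Fin d → ℝ) → Fin d → ℝ} {K : ℝ} (hK : 0 ≤ K)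
    (hG : ∀ μ ∈ simplex d, ∀ ν ∈ simplex d,
      |G ν - G μ - (ν - μ) ⬝ᵥ ℓ μ| ≤ K * l1 (ν - μ) ^ 2) (x : Fin N → Fin d) :
    |genQ α (fun x => G (empMeas x)) x
      - Matrix.vecMul (empMeas x) (α (empMeas x)) ⬝ᵥ ℓ (empMeas x)| ≤ 4 * d * A * K / N := by
  have hN' : (0 : ℝ) < N := by positivity
  have hμ := empMeas_mem hN x
  set μ := empMeas x with hμdef
  have hlin : Matrix.vecMul μ (α μ) ⬝ᵥ ℓ μ
      = ∑ i, ∑ y, α μ (x i) y * ((1 / N) * (ℓ μ y - ℓ μ (x i))) := by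
    rw [← Matrix.dotProduct_mulVec, hμdef, sum_empMeas, ← hμdef, Finset.sum_div]
    refine Finset.sum_congr rfl fun i _ => ?_
    have h0 := hα.2.2 μ hμ (x i)
    have : ∑ y, α μ (x i) y * ((1 / N) * (ℓ μ y - ℓ μ (x i)))
        = (∑ y, α μ (x i) y * ℓ μ y) / N - (∑ y, α μ (x i) y) * (ℓ μ (x i) / N) := by
      rw [Finset.sum_div, Finset.sum_mul, ← Finset.sum_sub_distrib]
      exact Finset.sum_congr rfl fun y _ => by ring
    rw [this, h0, Matrix.mulVec, dotProduct]
    ring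
  have hgen : genQ α (fun x => G (empMeas x)) x
      = ∑ i, ∑ y, α μ (x i) y * (G (empMeas (Function.update x i y)) - G μ) := by
    rw [genQ]
    refine Finset.sum_congr rfl fun i _ => ?_
    rw [Finset.sum_filter]
    refine Finset.sum_congr rfl fun y _ => ?_
    split_ifs with hy
    · rfl
    · push Not at hy
      simp [hy, hμdef]
  rw [hlin, hgen, ← Finset.sum_sub_distrib]
  have hterm : ∀ i y, |α μ (x i) y * (G (empMeas (Function.update x i y)) - G μ)
      - α μ (x i) y * ((1 / N) * (ℓ μ y - ℓ μ (x i)))| ≤ A * (K * (2 / N) ^ 2) := fun i y => by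
    rw [← mul_sub, abs_mul]
    refine mul_le_mul (h1 μ hμ _ _) ?_ (abs_nonneg _) hA
    have h2 := hG μ hμ _ (empMeas_mem hN (Function.update x i y))
    rw [hμdef, empMeas_update, ← hμdef] at h2
    have e : ((1 / (N : ℝ)) • (bvec y - bvec (x i))) ⬝ᵥ ℓ μ
        = (1 / N) * (ℓ μ y - ℓ μ (x i)) := by
      rw [smul_dotProduct, sub_dotProduct]
      simp [dotProduct, bvec]
    rw [e] at h2
    refine h2.trans ?_
    rw [l1_smul, abs_of_pos (by positivity)]
    have := l1_sub_le_two (bvec_mem y) (bvec_mem (x i))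
    have h0 := l1_nonneg (bvec y - bvec (x i))
    calc K * (1 / N * l1 (bvec y - bvec (x i))) ^ 2 ≤ K * (1 / N * 2) ^ 2 := by gcongr
      _ = _ := by ring
  calc _ ≤ ∑ _i : Fin N, ∑ _y : Fin d, A * (K * (2 / N) ^ 2) := by
        refine (Finset.abs_sum_le_sum_abs _ _).trans (Finset.sum_le_sum fun i _ => ?_)
        rw [← Finset.sum_sub_distrib]
        exact (Finset.abs_sum_le_sum_abs _ _).trans (Finset.sum_le_sum fun y _ => hterm i y)
    _ = 4 * d * A * K / N := by
        simp
        field_simp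
        ring

/-! ### Independent initial conditions -/

lemma sum_prod_eq {d N : ℕ} (φ : Fin N → Fin d → ℝ) :
    ∑ x : Fin N → Fin d, ∏ i, φ i (x i) = ∏ i, ∑ w, φ i w := by
  rw [Finset.prod_univ_sum, Fintype.piFinset_univ]

lemma iid_total {d N : ℕ} {μ : Fin d → ℝ} (hμ : μ ∈ simplex d) :
    ∑ x : Fin N → Fin d, ∏ i, μ (x i) = 1 := by
  rw [sum_prod_eq (fun _ => μ)]
  simp [hμ.2]

lemma iid_mean_zero {d N : ℕ} {μ : Fin d → ℝ} {f : Fin d → ℝ} (hf : ∑ w, μ w * f w = 0)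
    (j : Fin N) : ∑ x : Fin N → Fin d, (∏ i, μ (x i)) * f (x j) = 0 := by
  have e : ∀ x : Fin N → Fin d, (∏ i, μ (x i)) * f (x j)
      = ∏ i, (μ (x i) * if i = j then f (x i) else 1) := fun x => by
    rw [Finset.prod_mul_distrib]
    simp
  simp only [e]
  rw [sum_prod_eq (fun i w => μ w * if i = j then f w else 1)]
  exact Finset.prod_eq_zero (Finset.mem_univ j) (by simpa using hf)

lemma iid_cov_zero {d N : ℕ} {μ : Fin d → ℝ} {f : Fin d → ℝ} (hf : ∑ w, μ w * f w = 0)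
    {j k : Fin N} (hjk : j ≠ k) :
    ∑ x : Fin N → Fin d, (∏ i, μ (x i)) * (f (x j) * f (x k)) = 0 := by
  have e : ∀ x : Fin N → Fin d, (∏ i, μ (x i)) * (f (x j) * f (x k))
      = ∏ i, (μ (x i) * ((if i = j then f (x i) else 1) * if i = k then f (x i) else 1)) :=
    fun x => by
      rw [Finset.prod_mul_distrib, Finset.prod_mul_distrib]
      simp
  simp only [e]
  rw [sum_prod_eq (fun i w => μ w * ((if i = j then f w else 1) * if i = k then f w else 1))]
  exact Finset.prod_eq_zero (Finset.mem_univ j) (by simpa [hjk] using hf)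

lemma empMeas_sub_apply {d N : ℕ} (hN : 1 ≤ N) (x : Fin N → Fin d) (μ : Fin d → ℝ) (z : Fin d) :
    (empMeas x - μ) z = (∑ i, (bvec z (x i) - μ z)) / N := by
  have hN' : (N : ℝ) ≠ 0 := by positivity
  simp only [Pi.sub_apply, empMeas, bvec, Finset.sum_sub_distrib, Finset.sum_const,
    Finset.card_univ, Fintype.card_fin, nsmul_eq_mul]
  field_simp

lemma sum_centered {d : ℕ} {μ : Fin d → ℝ} (hμ : μ ∈ simplex d) (z : Fin d) :
    ∑ w, μ w * (bvec z w - μ z) = 0 := by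
  simp only [mul_sub, Finset.sum_sub_distrib, ← Finset.sum_mul, hμ.2]
  simp [bvec]

lemma iid_empMeas_mean {d N : ℕ} (hN : 1 ≤ N) {μ : Fin d → ℝ} (hμ : μ ∈ simplex d)
    (ℓ : Fin d → ℝ) :
    ∑ x : Fin N → Fin d, (∏ i, μ (x i)) * ((empMeas x - μ) ⬝ᵥ ℓ) = 0 := by
  simp only [dotProduct, Finset.mul_sum]
  rw [Finset.sum_comm]
  refine Finset.sum_eq_zero fun z _ => ?_
  have : ∀ x : Fin N → Fin d, (∏ i, μ (x i)) * ((empMeas x - μ) z * ℓ z)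
      = (∑ j, (∏ i, μ (x i)) * (bvec z (x j) - μ z)) * (ℓ z / N) := fun x => by
    rw [empMeas_sub_apply hN, ← Finset.mul_sum]
    ring
  simp only [this, ← Finset.sum_mul]
  rw [Finset.sum_comm, Finset.sum_eq_zero, zero_mul]
  exact fun j _ => iid_mean_zero (f := fun w => bvec z w - μ z) (sum_centered hμ z) j

lemma iid_empMeas_var {d N : ℕ} (hN : 1 ≤ N) {μ : Fin d → ℝ} (hμ : μ ∈ simplex d) (z : Fin d) :
    ∑ x : Fin N → Fin d, (∏ i, μ (x i)) * (empMeas x - μ) z ^ 2 ≤ 1 / N := by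
  have hN' : (0 : ℝ) < N := by positivity
  have e : ∀ x : Fin N → Fin d, (∏ i, μ (x i)) * (empMeas x - μ) z ^ 2
      = (∑ j, ∑ k, (∏ i, μ (x i)) * ((bvec z (x j) - μ z) * (bvec z (x k) - μ z))) / N ^ 2 :=
    fun x => by
      rw [empMeas_sub_apply hN, div_pow, sq (∑ i, _), Finset.sum_mul_sum]
      simp only [Finset.mul_sum, mul_div_assoc', Finset.sum_div]
  simp only [e, ← Finset.sum_div]
  rw [Finset.sum_comm]
  have hj : ∀ j : Fin N, ∑ x : Fin N → Fin d, ∑ k, (∏ i, μ (x i)) *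
      ((bvec z (x j) - μ z) * (bvec z (x k) - μ z)) ≤ 1 := fun j => by
    rw [Finset.sum_comm, Finset.sum_eq_single j]
    · rw [← iid_total (N := N) hμ]
      refine Finset.sum_le_sum fun x _ => ?_
      refine mul_le_of_le_one_right (Finset.prod_nonneg fun i _ => hμ.1 _) ?_
      have := hμ.1 z
      have := le_one_of_mem hμ z
      have := (bvec_mem z).1 (x j)
      have := le_one_of_mem (bvec_mem z) (x j)
      nlinarith
    · exact fun k _ hk =>
        iid_cov_zero (f := fun w => bvec z w - μ z) (sum_centered hμ z) hk.symm
    · simp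
  have := Finset.sum_le_sum fun j (_ : j ∈ Finset.univ) => hj j
  rw [div_le_div_iff₀ (by positivity) hN']
  simp only [Finset.sum_const, Finset.card_univ, Fintype.card_fin, nsmul_eq_mul, mul_one] at this
  nlinarith

lemma iid_error {d N : ℕ} (hN : 1 ≤ N) {μ : Fin d → ℝ} (hμ : μ ∈ simplex d)
    {G : (Fin d → ℝ) → ℝ} {ℓ : Fin d → ℝ} {K : ℝ} (hK : 0 ≤ K)
    (hG : ∀ ν ∈ simplex d, |G ν - G μ - (ν - μ) ⬝ᵥ ℓ| ≤ K * l1 (ν - μ) ^ 2) :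
    |(∑ x : Fin N → Fin d, (∏ i, μ (x i)) * G (empMeas x)) - G μ| ≤ K * d ^ 2 / N := by
  have e : (∑ x : Fin N → Fin d, (∏ i, μ (x i)) * G (empMeas x)) - G μ
      = ∑ x : Fin N → Fin d, (∏ i, μ (x i)) *
        (G (empMeas x) - G μ - (empMeas x - μ) ⬝ᵥ ℓ) := by
    simp only [mul_sub, Finset.sum_sub_distrib, iid_empMeas_mean hN hμ ℓ, ← Finset.sum_mul,
      iid_total hμ]
    ring
  rw [e]
  have hp : ∀ x : Fin N → Fin d, 0 ≤ ∏ i, μ (x i) := fun x =>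
    Finset.prod_nonneg fun i _ => hμ.1 _
  have hl : ∀ v : Fin d → ℝ, l1 v ^ 2 ≤ d * ∑ z, v z ^ 2 := fun v => by
    have := sq_sum_le_card_mul_sum_sq (s := Finset.univ) (f := fun z => |v z|)
    simpa [l1] using this
  calc _ ≤ ∑ x : Fin N → Fin d, (∏ i, μ (x i)) * (K * (d * ∑ z, (empMeas x - μ) z ^ 2)) := by
        refine (Finset.abs_sum_le_sum_abs _ _).trans (Finset.sum_le_sum fun x _ => ?_)
        rw [abs_mul, abs_of_nonneg (hp x)]
        refine mul_le_mul_of_nonneg_left ((hG _ (empMeas_mem hN x)).trans ?_) (hp x)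
        exact mul_le_mul_of_nonneg_left (hl _) hK
    _ = K * d * ∑ z, ∑ x : Fin N → Fin d, (∏ i, μ (x i)) * (empMeas x - μ) z ^ 2 := by
        rw [Finset.sum_comm, Finset.mul_sum]
        refine Finset.sum_congr rfl fun x _ => ?_
        rw [← Finset.mul_sum]
        ring
    _ ≤ K * d * ∑ _z : Fin d, (1 / (N : ℝ)) := by
        gcongr with z
        exact iid_empMeas_var hN hμ z
    _ = K * d ^ 2 / N := by
        simp
        ring

/-! ### Interpolation between the particle system and the flow -/

/-- Right derivative in time of `Φ (m r μ)`: by the semigroup property it equals the derivative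
of `Φ ∘ m r` in the direction of the drift. -/
lemma hasDerivWithinAt_flow {d : ℕ} {α : (Fin d → ℝ) → Matrix (Fin d) (Fin d) ℝ}
    {m : ℝ → (Fin d → ℝ) → Fin d → ℝ} (hm : IsFlow α m) {K : NNReal}
    (hK : LipschitzOnWith K (fun μ => Matrix.vecMul μ (α μ)) (simplex d))
    {Φ : (Fin d → ℝ) → ℝ} {r : ℝ} (hr : 0 ≤ r) {ℓ : Fin d → ℝ} {B : ℝ} (hB : 0 ≤ B)
    {μ : Fin d → ℝ} (hμ : μ ∈ simplex d)
    (hG : ∀ ν ∈ simplex d, |Φ (m r ν) - Φ (m r μ) - (ν - μ) ⬝ᵥ ℓ| ≤ B * l1 (ν - μ) ^ 2) :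
    HasDerivWithinAt (fun s => Φ (m s μ)) (Matrix.vecMul μ (α μ) ⬝ᵥ ℓ) (Set.Ici r) r := by
  obtain ⟨h0, hmem, hder⟩ := hm μ hμ
  have hd0 := hder 0 le_rfl
  rw [h0] at hd0
  -- the increment `m h μ - μ`, read off at `h = s - r`
  have hv : HasDerivAt (fun s => m (s - r) μ) (Matrix.vecMul μ (α μ)) r := by
    have hd0' : HasDerivAt (fun s => m s μ) (Matrix.vecMul μ (α μ)) (r - r) := by
      rwa [sub_self]
    exact hd0'.comp_sub_const r r
  have hlin : HasDerivAt (fun s => m (s - r) μ ⬝ᵥ ℓ) (Matrix.vecMul μ (α μ) ⬝ᵥ ℓ) r := by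
    simp only [dotProduct]
    exact HasDerivAt.fun_sum fun z _ => ((hasDerivAt_pi.1 hv) z).mul_const _
  have hrem : HasDerivWithinAt
      (fun s => Φ (m s μ) - m (s - r) μ ⬝ᵥ ℓ) 0 (Set.Ici r) r := by
    rw [hasDerivWithinAt_iff_isLittleO]
    have hO : (fun s => m (s - r) μ - μ) =O[𝓝 r] fun s => s - r := by
      have := hv.isBigO_sub
      simpa [h0] using this
    have hsq : (fun s : ℝ => ‖m (s - r) μ - μ‖ ^ 2) =o[𝓝 r] fun s => s - r := by
      have h2 : (fun s : ℝ => (s - r) ^ 2) =o[𝓝 r] fun s => s - r := by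
        have h3 : (fun s : ℝ => s - r) =o[𝓝 r] fun _ => (1 : ℝ) := by
          rw [Asymptotics.isLittleO_one_iff]
          have : Tendsto (fun s : ℝ => s - r) (𝓝 r) (𝓝 (r - r)) :=
            (continuous_sub_right r).tendsto r
          rwa [sub_self] at this
        have := h3.mul_isBigO (Asymptotics.isBigO_refl (fun s : ℝ => s - r) (𝓝 r))
        simpa [sq] using this
      exact (hO.norm_left.pow 2).trans_isLittleO h2
    refine Asymptotics.IsBigO.trans_isLittleO (g := fun s : ℝ => ‖m (s - r) μ - μ‖ ^ 2) ?_
      (hsq.mono nhdsWithin_le_nhds)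
    refine Asymptotics.IsBigO.of_bound (B * d ^ 2) ?_
    filter_upwards [self_mem_nhdsWithin] with s hs
    have hs' : 0 ≤ s - r := sub_nonneg.2 hs
    have e : m s μ = m r (m (s - r) μ) := by
      rw [← flow_add hm hK hμ hs' hr, add_sub_cancel]
    have key := hG _ (hmem _ hs')
    rw [sub_dotProduct] at key
    have hl : l1 (m (s - r) μ - μ) ≤ d * ‖m (s - r) μ - μ‖ :=
      l1_le_of_abs_le fun z => norm_le_pi_norm (m (s - r) μ - μ) z
    have hl0 := l1_nonneg (m (s - r) μ - μ)
    rw [smul_zero, sub_zero, sub_self, h0, Real.norm_eq_abs, norm_pow, norm_norm, e]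
    calc _ = |Φ (m r (m (s - r) μ)) - Φ (m r μ) - (m (s - r) μ ⬝ᵥ ℓ - μ ⬝ᵥ ℓ)| := by
          congr 1
          ring
      _ ≤ B * (d * ‖m (s - r) μ - μ‖) ^ 2 := key.trans (by gcongr)
      _ = _ := by ring
  simpa using hrem.fun_add hlin.hasDerivWithinAt

/-- The function `g r = E Φ (m r μ^N_{t - r})` interpolates between the law at time `t` (`r = 0`)
and the flow started from the initial empirical measure (`r = t`). Its right derivative is the
drift of the Kolmogorov equation minus the generator, both applied to `Φ ∘ m r`, hence of size
`exp (-κ r) / N`, which is integrable over all times. -/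
lemma dynamic_error {d N : ℕ} (hN : 1 ≤ N) {α : (Fin d → ℝ) → Matrix (Fin d) (Fin d) ℝ}
    (hα : IsRate d α) {A : ℝ} (hA : 0 ≤ A) (h1 : ∀ μ ∈ simplex d, ∀ x y, |α μ x y| ≤ A)
    {m : ℝ → (Fin d → ℝ) → Fin d → ℝ} (hm : IsFlow α m) {K : NNReal}
    (hK : LipschitzOnWith K (fun μ => Matrix.vecMul μ (α μ)) (simplex d))
    {Φ : (Fin d → ℝ) → ℝ} {LΦ : ℝ}
    (hΦ : ∀ μ ∈ simplex d, ∀ ν ∈ simplex d, |Φ μ - Φ ν| ≤ LΦ * l1 (μ - ν))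
    {C κ : ℝ} (hC : 0 ≤ C) (hκ : 0 < κ)
    (hT : ∀ r, 0 ≤ r → ∃ ℓ : (Fin d → ℝ) → Fin d → ℝ, ∀ μ ∈ simplex d, ∀ ν ∈ simplex d,
      |Φ (m r ν) - Φ (m r μ) - (ν - μ) ⬝ᵥ ℓ μ| ≤ C * Real.exp (-κ * r) * l1 (ν - μ) ^ 2)
    {p : ℝ → (Fin N → Fin d) → ℝ} (hp : IsLaw α p) {t : ℝ} (ht : 0 ≤ t) :
    |(∑ x, p 0 x * Φ (m t (empMeas x))) - ∑ x, p t x * Φ (empMeas x)|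
      ≤ 4 * d * A * C / κ / N := by
  have hN' : (0 : ℝ) < N := by positivity
  choose! ℓ hℓ using hT
  have hpx : ∀ x, ∀ s, 0 ≤ s → ∃ p', HasDerivAt (fun s => p s x) p' s := fun x s hs => by
    have := hp.2 (Pi.single x 1) s hs
    refine ⟨_, this.congr_of_eventuallyEq (Eventually.of_forall fun s => ?_)⟩
    simp [Pi.single_apply]
  have hcontΦ : ContinuousOn Φ (simplex d) := by
    have : LipschitzOnWith (LΦ.toNNReal * (d : NNReal)) Φ (simplex d) := by
      refine LipschitzOnWith.of_dist_le_mul fun μ hμ ν hν => ?_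
      have b3 : l1 (μ - ν) ≤ d * dist μ ν := l1_le_of_abs_le fun z => by
        rw [Pi.sub_apply, ← Real.dist_eq]
        exact dist_le_pi_dist μ ν z
      rw [Real.dist_eq, NNReal.coe_mul, NNReal.coe_natCast, mul_assoc]
      exact (hΦ μ hμ ν hν).trans
        (mul_le_mul (Real.le_coe_toNNReal _) b3 (l1_nonneg _) (NNReal.coe_nonneg _))
    exact this.continuousOn
  set g : ℝ → ℝ := fun r => ∑ x, p (t - r) x * Φ (m r (empMeas x)) with hg
  have hgcont : ContinuousOn g (Set.Icc 0 t) := by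
    refine continuousOn_finsetSum _ fun x _ => ContinuousOn.mul ?_ ?_
    · intro r hr
      obtain ⟨p', hp'⟩ := hpx x (t - r) (by linarith [hr.2])
      have : ContinuousAt (fun r : ℝ => t - r) r := by fun_prop
      exact (ContinuousAt.comp (g := fun s => p s x) hp'.continuousAt this).continuousWithinAt
    · refine hcontΦ.comp (fun r hr => ?_) fun r hr => (hm _ (empMeas_mem hN x)).2.1 r hr.1
      exact ((hm _ (empMeas_mem hN x)).2.2 r hr.1).continuousAt.continuousWithinAt
  set g' : ℝ → ℝ := fun r => ∑ x, p (t - r) x *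
    (Matrix.vecMul (empMeas x) (α (empMeas x)) ⬝ᵥ ℓ r (empMeas x)
      - genQ α (fun x => Φ (m r (empMeas x))) x) with hg'
  have hgder : ∀ r ∈ Set.Ico 0 t, HasDerivWithinAt g (g' r) (Set.Ici r) r := by
    intro r hr
    have hs : 0 ≤ t - r := by linarith [hr.2]
    have hsub : HasDerivAt (fun r : ℝ => t - r) (-1) r := by
      simpa using (hasDerivAt_id r).const_sub t
    have d1 : HasDerivWithinAt (fun r' => ∑ x, p (t - r') x * Φ (m r (empMeas x)))
        (-(∑ x, p (t - r) x * genQ α (fun x => Φ (m r (empMeas x))) x)) (Set.Ici r) r := by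
      have := (hp.2 (fun x => Φ (m r (empMeas x))) (t - r) hs).comp_const_sub t r
      exact this.hasDerivWithinAt
    -- the second factor vanishes at the base point, so only its derivative contributes
    have d2 : HasDerivWithinAt
        (fun r' => ∑ x, p (t - r') x * (Φ (m r' (empMeas x)) - Φ (m r (empMeas x))))
        (∑ x, p (t - r) x * (Matrix.vecMul (empMeas x) (α (empMeas x)) ⬝ᵥ ℓ r (empMeas x)))
        (Set.Ici r) r := by
      refine HasDerivWithinAt.fun_sum fun x _ => ?_
      obtain ⟨p', hp'⟩ := hpx x (t - r) hs
      have e1 : HasDerivWithinAt (fun r' => p (t - r') x) (p' * -1) (Set.Ici r) r :=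
        (HasDerivAt.comp (h₂ := fun s => p s x) r hp' hsub).hasDerivWithinAt
      have e2 := (hasDerivWithinAt_flow hm hK hr.1 (by positivity) (empMeas_mem hN x)
        (hℓ r hr.1 _ (empMeas_mem hN x))).sub_const (Φ (m r (empMeas x)))
      simpa using e1.fun_mul e2
    have := d1.add d2
    refine (this.congr_deriv ?_).congr_of_eventuallyEq (Eventually.of_forall fun r' => ?_) ?_
    · simp only [hg', mul_sub, Finset.sum_sub_distrib]
      ring
    · simp only [hg, Pi.add_apply, ← Finset.sum_add_distrib]
      exact Finset.sum_congr rfl fun x _ => by ring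
    · simp [hg]
  have hbound : ∀ r ∈ Set.Ico 0 t, ‖g' r‖ ≤ 4 * d * A * C / N * Real.exp (-κ * r) := by
    intro r hr
    obtain ⟨hp0, hp1⟩ := hp.1 (t - r) (by linarith [hr.2])
    calc ‖g' r‖ ≤ ∑ x, p (t - r) x * (4 * d * A * (C * Real.exp (-κ * r)) / N) := by
          refine (Finset.abs_sum_le_sum_abs _ _).trans (Finset.sum_le_sum fun x _ => ?_)
          rw [abs_mul, abs_of_nonneg (hp0 x), abs_sub_comm]
          exact mul_le_mul_of_nonneg_left
            (genQ_approx (G := fun μ => Φ (m r μ)) hN hα hA h1 (by positivity) (hℓ r hr.1) x)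
            (hp0 x)
      _ = 4 * d * A * C / N * Real.exp (-κ * r) := by
          rw [← Finset.sum_mul, hp1]
          ring
  have key := image_norm_le_of_norm_deriv_right_le_deriv_boundary (a := 0) (b := t)
    (f := fun r => g r - g 0) (f' := g')
    (B := fun r => 4 * d * A * C / N / κ * (1 - Real.exp (-κ * r)))
    (B' := fun r => 4 * d * A * C / N * Real.exp (-κ * r))
    (hgcont.sub continuousOn_const) (fun r hr => (hgder r hr).sub_const _) (by simp)
    (fun r => by
      have h2 : HasDerivAt (fun r : ℝ => Real.exp (-κ * r)) (Real.exp (-κ * r) * -κ) r := by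
        simpa using ((hasDerivAt_id r).const_mul (-κ)).exp
      refine ((h2.const_sub 1).const_mul (4 * d * A * C / N / κ)).congr_deriv ?_
      field_simp)
    hbound ⟨ht, le_rfl⟩
  have e0 : g 0 = ∑ x, p t x * Φ (empMeas x) := by
    simp only [hg, sub_zero]
    exact Finset.sum_congr rfl fun x _ => by rw [(hm _ (empMeas_mem hN x)).1]
  have et : g t = ∑ x, p 0 x * Φ (m t (empMeas x)) := by simp [hg]
  rw [Real.norm_eq_abs, et, e0] at key
  refine key.trans ?_
  have : 4 * d * A * C / N / κ * (1 - Real.exp (-κ * t)) ≤ 4 * d * A * C / N / κ * 1 := by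
    gcongr
    linarith [Real.exp_pos (-κ * t)]
  refine this.trans (le_of_eq ?_)
  field_simp

/-- Uniform-in-time weak error of order `1/N` between the empirical measures
of the `N`-particle system (started from i.i.d. `μ₀` initial conditions) and the mean field
flow `m(t; μ₀)`, tested against a (D-Lip) test function `Φ`. -/
theorem uniform_in_time_weak_error {d : ℕ} (hd : 1 < d)
    (α : (Fin d → ℝ) → Matrix (Fin d) (Fin d) ℝ)
    (δα : (Fin d → ℝ) → Fin d → Matrix (Fin d) (Fin d) ℝ)
    (m : ℝ → (Fin d → ℝ) → Fin d → ℝ)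
    (δm : ℝ → (Fin d → ℝ) → Fin d → Fin d → ℝ)
    (lam c₁ k₁ : ℝ)
    (hα : IsRate d α) (hαD : DLipRate α δα)
    (hm : IsFlow α m) (hErg : Erg m δm lam c₁ k₁)
    (Φ : (Fin d → ℝ) → ℝ) (δΦ : (Fin d → ℝ) → Fin d → ℝ) (hΦ : DLipR Φ δΦ) :
    ∃ C : ℝ, ∀ μ₀ ∈ simplex d, ∀ N : ℕ, 1 ≤ N →
      ∀ p : ℝ → (Fin N → Fin d) → ℝ, IsLaw α p →
        (∀ x : Fin N → Fin d, p 0 x = ∏ i, μ₀ (x i)) →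
        ∀ t : ℝ, 0 ≤ t →
          |(∑ x : Fin N → Fin d, p t x * Φ (empMeas x)) - Φ (m t μ₀)| ≤ C / N := by
  obtain ⟨LΦ, KΦ, hΦ'⟩ := hΦ.exists_DLipC
  obtain ⟨A, hA, h1, h2⟩ := rate_bounds hd hαD
  have hlip := drift_lipschitz hA h1 h2
  obtain ⟨C, hC, hT⟩ := taylor_decay hm hErg hlip hΦ'
  have hlam : 0 < lam / 2 := half_pos hErg.1
  refine ⟨4 * d * A * C / (lam / 2) + C * d ^ 2, fun μ₀ hμ₀ N hN p hp hp0 t ht => ?_⟩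
  have hdyn := dynamic_error hN hα hA h1 hm hlip hΦ'.lip hC hlam hT hp ht
  obtain ⟨ℓ, hℓ⟩ := hT t ht
  have hstart := iid_error (G := fun μ => Φ (m t μ)) hN hμ₀ hC fun ν hν =>
    (hℓ μ₀ hμ₀ ν hν).trans (mul_le_mul_of_nonneg_right
      (mul_le_of_le_one_right hC (Real.exp_le_one_iff.2 (by nlinarith))) (sq_nonneg _))
  simp only [← hp0] at hstart
  rw [add_div]
  rw [abs_sub_comm] at hdyn
  exact (abs_sub_le _ _ _).trans (add_le_add hdyn hstart)
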